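/- Let p be a prime with p ≡ 3 (mod 4), and let α be a real number with 0 < α < 1 such that αp is not an integer. Then the partial sums Σ_{m=1}^{M} ((1 − cos(2πmα))/m) · (m/p) converge as M → ∞ to (π/√p) · L(α,p). -/

import Mathlib

open Filter

/-!
For a prime `p ≡ 3 (mod 4)` the quadratic Gauss sum is `i√p`, so `(m/p) √p` is the discrete sine
transform `∑ⱼ (j/p) sin(2πmj/p)` of the Legendre symbol. As the Legendre symbol is odd, multiplying
this by `1 - cos(2πmα)` has the same effect as replacing `sin(2πmj/p)` by
`sin(2πmj/p) - sin(2πm(j/p - α))`. Dividing by `m` and summing over `m` gives differences of values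
of the sawtooth function `π (1/2 - {x})`, which single out the residues `j/p` below `α`.

The sign of the Gauss sum is found by comparing it with the product of `ζ ^ k - ζ ^ (p - k)` over
`1 ≤ k ≤ (p - 1)/2`, which equals `i ^ ((p - 1)/2) √p`. The two agree up to a sign `ε`, so the
polynomials behind them satisfy a congruence modulo the cyclotomic polynomial, which is
`(X - 1) ^ (p - 1)` over `𝔽_p`. There both vanish at `X = 1` to order `(p - 1)/2`, and comparing the
leading coefficients determines `ε`.
-/

section SawtoothSeries

open Real Topology

lemma sum_Icc_one_eq_sum_range_succ {β : Type*} [AddCommMonoid β] {f : ℕ → β} (hf : f 0 = 0)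
    (n : ℕ) : ∑ i ∈ Finset.Icc 1 n, f i = ∑ i ∈ Finset.range (n + 1), f i := by
  rw [Finset.sum_range_succ', hf, add_zero, Finset.range_eq_Ico, Finset.sum_Ico_add' f 0 n 1]
  rfl

lemma one_sub_re_pos {z : ℂ} (hz : ‖z‖ ≤ 1) (hz1 : z ≠ 1) : 0 < (1 - z).re := by
  have hre : z.re ≤ 1 := (Complex.re_le_norm z).trans hz
  refine sub_pos.2 (hre.lt_of_ne fun h => hz1 ?_)
  have hnorm : z.re = ‖z‖ := le_antisymm (Complex.re_le_norm z) (hz.trans_eq h.symm)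
  exact Complex.ext h (Complex.nonneg_iff.1 (Complex.re_eq_norm.1 hnorm)).2.symm

lemma cauchySeq_sum_range_pow_div {z : ℂ} (hz : ‖z‖ ≤ 1) (hz1 : z ≠ 1) :
    CauchySeq fun n : ℕ => ∑ i ∈ Finset.range n, ((1 : ℝ) / (i + 1)) • z ^ (i + 1) := by
  refine Antitone.cauchySeq_series_mul_of_tendsto_zero_of_bounded (b := 2 / ‖z - 1‖)
    (fun a b hab => by gcongr) tendsto_one_div_add_atTop_nhds_zero_nat fun n => ?_
  have hgeom : ∑ i ∈ Finset.range n, z ^ (i + 1) = z * ((z ^ n - 1) / (z - 1)) := by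
    simp only [pow_succ', ← Finset.mul_sum, geom_sum_eq hz1]
  calc ‖∑ i ∈ Finset.range n, z ^ (i + 1)‖
      = ‖z‖ * (‖z ^ n - 1‖ / ‖z - 1‖) := by rw [hgeom, norm_mul, norm_div]
    _ ≤ 1 * ((1 + 1) / ‖z - 1‖) := by
        gcongr
        calc ‖z ^ n - 1‖ ≤ ‖z‖ ^ n + ‖(1 : ℂ)‖ := by rw [← norm_pow]; exact norm_sub_le _ _
          _ ≤ 1 + 1 := by rw [norm_one]; gcongr; exact pow_le_one₀ (norm_nonneg z) hz
    _ = 2 / ‖z - 1‖ := by ring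

lemma tendsto_neg_log_one_sub_mul {z : ℂ} (hz : ‖z‖ ≤ 1) (hz1 : z ≠ 1) :
    Tendsto (fun r : ℝ => -Complex.log (1 - r * z)) (𝓝[<] 1) (𝓝 (-Complex.log (1 - z))) := by
  have hcont : ContinuousAt (fun r : ℝ => -Complex.log (1 - r * z)) 1 := by
    refine (ContinuousAt.clog (by fun_prop) ?_).neg
    rw [Complex.ofReal_one, one_mul]
    exact Or.inl (one_sub_re_pos hz hz1)
  simpa only [Complex.ofReal_one, one_mul] using hcont.tendsto.mono_left nhdsWithin_le_nhds

/- The series converges by Dirichlet's test, and Abel's limit theorem identifies the sum. -/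
lemma tendsto_sum_range_pow_div_neg_log {z : ℂ} (hz : ‖z‖ ≤ 1) (hz1 : z ≠ 1) :
    Tendsto (fun n : ℕ => ∑ i ∈ Finset.range n, z ^ i / i) atTop (𝓝 (-Complex.log (1 - z))) := by
  obtain ⟨l, hl⟩ := cauchySeq_tendsto_of_complete (cauchySeq_sum_range_pow_div hz hz1)
  have hsum : Tendsto (fun n : ℕ => ∑ i ∈ Finset.range n, z ^ i / i) atTop (𝓝 l) := by
    rw [← tendsto_add_atTop_iff_nat 1]
    refine hl.congr fun n => ?_
    rw [Finset.sum_range_succ', Nat.cast_zero, div_zero, add_zero]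
    refine Finset.sum_congr rfl fun i _ => ?_
    rw [Complex.real_smul]
    push_cast
    ring
  have habel := Complex.tendsto_tsum_powerSeries_nhdsWithin_lt hsum
  rw [tendsto_map'_iff] at habel
  suffices hl : l = -Complex.log (1 - z) from hl ▸ hsum
  refine tendsto_nhds_unique habel ((tendsto_neg_log_one_sub_mul hz hz1).congr' ?_)
  filter_upwards [Ioo_mem_nhdsLT zero_lt_one] with r hr
  have hrz : ‖r * z‖ < 1 := by
    rw [norm_mul, Complex.norm_real, norm_of_nonneg hr.1.le]
    exact mul_lt_one_of_nonneg_of_lt_one_left hr.1.le hr.2 hz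
  rw [← (Complex.hasSum_taylorSeries_neg_log hrz).tsum_eq]
  refine tsum_congr fun n => ?_
  rw [mul_pow]
  ring

lemma arg_one_sub_exp_mul_I {θ : ℝ} (h0 : 0 < θ) (h1 : θ < 2 * π) :
    (1 - Complex.exp (θ * Complex.I)).arg = (θ - π) / 2 := by
  have hsin : 0 < 2 * sin (θ / 2) :=
    mul_pos two_pos (sin_pos_of_pos_of_lt_pi (by linarith) (by linarith))
  have hpolar : 1 - Complex.exp (θ * Complex.I) = (2 * sin (θ / 2) : ℝ) *
      (Complex.cos ((θ - π) / 2 : ℝ) + Complex.sin ((θ - π) / 2 : ℝ) * Complex.I) := by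
    have hshift : (θ - π) / 2 = θ / 2 - π / 2 := by ring
    have hdouble : θ = 2 * (θ / 2) := by ring
    apply Complex.ext
    · rw [Complex.re_ofReal_mul, ← Complex.exp_mul_I, Complex.exp_ofReal_mul_I_re, Complex.sub_re,
        Complex.one_re, Complex.exp_ofReal_mul_I_re, hshift, cos_sub_pi_div_two]
      nth_rw 1 [hdouble]
      rw [cos_two_mul']
      linarith [sin_sq_add_cos_sq (θ / 2)]
    · rw [Complex.im_ofReal_mul, ← Complex.exp_mul_I, Complex.exp_ofReal_mul_I_im, Complex.sub_im,
        Complex.one_im, Complex.exp_ofReal_mul_I_im, hshift, sin_sub_pi_div_two]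
      nth_rw 1 [hdouble]
      rw [sin_two_mul]
      ring
  rw [hpolar]
  exact Complex.arg_mul_cos_add_sin_mul_I hsin ⟨by linarith, by linarith⟩

lemma tendsto_sum_sin_mul_div {θ : ℝ} (h0 : 0 < θ) (h1 : θ < 2 * π) :
    Tendsto (fun M : ℕ => ∑ m ∈ Finset.Icc 1 M, sin (m * θ) / m) atTop (𝓝 ((π - θ) / 2)) := by
  have hne : Complex.exp (θ * Complex.I) ≠ 1 := fun h => h0.ne'
    ((cos_eq_one_iff_of_lt_of_lt (by linarith) h1).1
      (by rw [← Complex.exp_ofReal_mul_I_re, h, Complex.one_re]))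
  have hlog := (Complex.continuous_im.tendsto _).comp
    (tendsto_sum_range_pow_div_neg_log (Complex.norm_exp_ofReal_mul_I θ).le hne)
  rw [Complex.neg_im, Complex.log_im, arg_one_sub_exp_mul_I h0 h1, ← neg_div, neg_sub] at hlog
  refine ((tendsto_add_atTop_iff_nat 1).2 hlog).congr fun M => ?_
  rw [sum_Icc_one_eq_sum_range_succ (by simp), Function.comp_apply, Complex.im_sum]
  refine Finset.sum_congr rfl fun m _ => ?_
  rw [Complex.div_natCast_im, ← Complex.exp_nat_mul, ← mul_assoc, ← Complex.ofReal_natCast,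
    ← Complex.ofReal_mul, Complex.exp_ofReal_mul_I_im]

lemma tendsto_sum_sin_two_pi_mul_div {x : ℝ} (hx : ∀ k : ℤ, x ≠ k) :
    Tendsto (fun M : ℕ => ∑ m ∈ Finset.Icc 1 M, sin (2 * π * m * x) / m) atTop
      (𝓝 (π * (1 / 2 - Int.fract x))) := by
  have hfract : 0 < Int.fract x := Int.fract_pos.2 (hx _)
  have hlim := tendsto_sum_sin_mul_div (θ := 2 * π * Int.fract x) (by positivity)
    (mul_lt_of_lt_one_right two_pi_pos (Int.fract_lt_one x))
  rw [show (π - 2 * π * Int.fract x) / 2 = π * (1 / 2 - Int.fract x) by ring] at hlim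
  refine hlim.congr fun M => Finset.sum_congr rfl fun m _ => ?_
  rw [← sin_sub_int_mul_two_pi (2 * π * m * x) (m * ⌊x⌋), ← Int.self_sub_floor]
  push_cast
  ring_nf

end SawtoothSeries

section OddFunctions

open Real Topology

variable {N : ℕ} [NeZero N]

lemma ceil_intCast_add_one_div_natCast (a : ℤ) : ⌈((a + 1 : ℤ) : ℚ) / N⌉ = a / N + 1 := by
  have hN : (0 : ℤ) < N := mod_cast NeZero.pos N
  have hlt : a / N * N < a + 1 := Int.lt_add_one_of_le (Int.ediv_mul_le a hN.ne')
  have hle : a + 1 ≤ (a / N + 1) * N := Int.lt_ediv_add_one_mul_self a hN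
  rw [Int.ceil_eq_iff, lt_div_iff₀ (mod_cast hN), div_le_iff₀ (mod_cast hN), Int.cast_add (a / N),
    Int.cast_one, add_sub_cancel_right]
  exact ⟨mod_cast hlt, mod_cast hle⟩

lemma count_natCast_eq (b : ℕ) (j : ZMod N) :
    ((b + 1).count (fun n => (n : ZMod N) = j) : ℤ) = (b - j.val) / N + 1 := by
  have hmod : ∀ n : ℕ, (n : ZMod N) = j ↔ n ≡ j.val [MOD N] := fun n => by
    rw [← ZMod.natCast_eq_natCast_iff, ZMod.natCast_zmod_val]
  simp only [hmod]
  rw [Nat.count_modEq_card_eq_ceil _ (NeZero.pos N), Nat.mod_eq_of_lt j.val_lt,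
    ← ceil_intCast_add_one_div_natCast]
  push_cast
  ring_nf

lemma sum_range_natCast_zmod {R : Type*} [Ring R] (Φ : ZMod N → R) (b : ℕ) :
    ∑ n ∈ Finset.range (b + 1), Φ n = ∑ j : ZMod N, (((b - j.val) / N + 1 : ℤ) : R) * Φ j := by
  rw [← Finset.sum_fiberwise (Finset.range (b + 1)) (fun n => (n : ZMod N))]
  refine Finset.sum_congr rfl fun j _ => ?_
  rw [← count_natCast_eq, Int.cast_natCast, ← nsmul_eq_mul, Nat.count_eq_card_filter_range,
    ← Finset.sum_const]
  exact Finset.sum_congr rfl fun n hn => congrArg Φ (Finset.mem_filter.1 hn).2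

/-- The discrete sine transform `m ↦ ∑ⱼ Φ(j) sin(2πmj/N)` of a function on `ℤ/Nℤ`. -/
noncomputable def discreteSineTransform (Φ : ZMod N → ℝ) (m : ℕ) : ℝ :=
  ∑ j, Φ j * sin (2 * π * m * (j.val / N))

lemma even_cos_two_pi_mul_val_div (m : ℕ) :
    Function.Even fun j : ZMod N => cos (2 * π * m * (j.val / N)) := by
  intro j
  have hN : (N : ℝ) ≠ 0 := NeZero.ne _
  by_cases hj : j = 0
  · simp [hj]
  dsimp only
  rw [ZMod.neg_val, if_neg hj, Nat.cast_sub j.val_lt.le, ← cos_nat_mul_two_pi_sub _ m]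
  congr 1
  field_simp
  ring

lemma sum_mul_sin_sub_eq_cos_mul_discreteSineTransform {Φ : ZMod N → ℝ} (hΦ : Φ.Odd) (m : ℕ)
    (α : ℝ) : ∑ j, Φ j * sin (2 * π * m * (j.val / N - α)) =
      cos (2 * π * m * α) * discreteSineTransform Φ m := by
  have hcos : ∑ j, Φ j * cos (2 * π * m * (j.val / N)) = 0 :=
    (hΦ.mul_even (even_cos_two_pi_mul_val_div m)).sum_eq_zero
  calc ∑ j, Φ j * sin (2 * π * m * (j.val / N - α))
      = cos (2 * π * m * α) * discreteSineTransform Φ m -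
          sin (2 * π * m * α) * ∑ j, Φ j * cos (2 * π * m * (j.val / N)) := by
        rw [discreteSineTransform, Finset.mul_sum, Finset.mul_sum, ← Finset.sum_sub_distrib]
        refine Finset.sum_congr rfl fun j _ => ?_
        rw [mul_sub (2 * π * m), sin_sub]
        ring
    _ = cos (2 * π * m * α) * discreteSineTransform Φ m := by rw [hcos, mul_zero, sub_zero]

lemma sum_one_sub_cos_div_mul_discreteSineTransform {Φ : ZMod N → ℝ} (hΦ : Φ.Odd) (α : ℝ)
    (M : ℕ) :
    ∑ m ∈ Finset.Icc 1 M, (1 - cos (2 * π * m * α)) / m * discreteSineTransform Φ m =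
      ∑ j, Φ j * (∑ m ∈ Finset.Icc 1 M, sin (2 * π * m * (j.val / N)) / m -
        ∑ m ∈ Finset.Icc 1 M, sin (2 * π * m * (j.val / N - α)) / m) := by
  simp only [← Finset.sum_sub_distrib, Finset.mul_sum]
  rw [Finset.sum_comm]
  refine Finset.sum_congr rfl fun m _ => ?_
  rw [div_mul_eq_mul_div, sub_mul, one_mul,
    ← sum_mul_sin_sub_eq_cos_mul_discreteSineTransform hΦ, discreteSineTransform,
    ← Finset.sum_sub_distrib, Finset.sum_div]
  exact Finset.sum_congr rfl fun j _ => by ring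

lemma floor_sub_val_div (α : ℝ) (j : ZMod N) :
    ⌊α - j.val / N⌋ = (⌊α * N⌋ - j.val) / N := by
  have hN : (N : ℝ) ≠ 0 := NeZero.ne _
  rw [← Int.floor_sub_natCast, ← Int.floor_div_natCast, sub_div, mul_div_cancel_right₀ _ hN]

lemma tendsto_sum_sin_sub_sum_sin {α : ℝ} (hα : ∀ k : ℤ, α * N ≠ k) {j : ZMod N} (hj : j ≠ 0) :
    Tendsto (fun M : ℕ => ∑ m ∈ Finset.Icc 1 M, sin (2 * π * m * (j.val / N)) / m -
        ∑ m ∈ Finset.Icc 1 M, sin (2 * π * m * (j.val / N - α)) / m) atTop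
      (𝓝 (π * (((⌊α * N⌋ - j.val) / N + 1 : ℤ) - α))) := by
  have hN : (0 : ℝ) < N := mod_cast NeZero.pos N
  have hfract : Int.fract (j.val / N : ℝ) = j.val / N := Int.fract_eq_self.2
    ⟨by positivity, (div_lt_one hN).2 (mod_cast j.val_lt)⟩
  have hj_int : ∀ k : ℤ, (j.val / N : ℝ) ≠ k := by
    have hpos : (0 : ℝ) < j.val / N := div_pos (mod_cast (ZMod.val_pos.2 hj)) hN
    intro k hk
    rw [← hfract, hk, Int.fract_intCast] at hpos
    exact hpos.false
  have hjα_int : ∀ k : ℤ, (j.val / N - α : ℝ) ≠ k := by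
    intro k hk
    apply hα (j.val - k * N)
    push_cast
    rw [← hk]
    field_simp
    ring
  have hlim := (tendsto_sum_sin_two_pi_mul_div hj_int).sub (tendsto_sum_sin_two_pi_mul_div hjα_int)
  convert hlim using 2
  have hfract_sub : Int.fract (j.val / N - α : ℝ) = 1 - Int.fract (α - j.val / N) := by
    rw [← neg_sub, Int.fract_neg]
    rw [← neg_sub, Ne, Int.fract_neg_eq_zero]
    exact (Int.fract_pos.2 (hjα_int _)).ne'
  rw [hfract, hfract_sub, ← floor_sub_val_div, ← Int.self_sub_floor]
  push_cast
  ring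

theorem tendsto_sum_one_sub_cos_div_mul_discreteSineTransform {Φ : ZMod N → ℝ} (hΦ : Φ.Odd)
    {α : ℝ} (h0 : 0 ≤ α) (hα : ∀ k : ℤ, α * N ≠ k) :
    Tendsto (fun M : ℕ =>
        ∑ m ∈ Finset.Icc 1 M, (1 - cos (2 * π * m * α)) / m * discreteSineTransform Φ m)
      atTop (𝓝 (π * ∑ n ∈ Finset.Icc 1 ⌊α * N⌋₊, Φ n)) := by
  have hsum : ∑ n ∈ Finset.Icc 1 ⌊α * N⌋₊, Φ n =
      ∑ j, Φ j * (((⌊α * N⌋ - j.val) / N + 1 : ℤ) - α) := by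
    rw [sum_Icc_one_eq_sum_range_succ (f := fun n : ℕ => Φ n) (by simpa using hΦ.map_zero),
      sum_range_natCast_zmod, Int.natCast_floor_eq_floor (by positivity)]
    simp only [mul_comm (Φ _), sub_mul, Finset.sum_sub_distrib, ← Finset.mul_sum, hΦ.sum_eq_zero,
      mul_zero, sub_zero]
  simp only [sum_one_sub_cos_div_mul_discreteSineTransform hΦ, hsum, Finset.mul_sum]
  refine tendsto_finsetSum _ fun j _ => ?_
  rw [mul_left_comm]
  rcases eq_or_ne j 0 with rfl | hj
  · simp [hΦ.map_zero]
  · exact (tendsto_sum_sin_sub_sum_sin hα hj).const_mul _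

end OddFunctions

section EulerOperator

open Polynomial

variable {R : Type*} [CommRing R]

variable (R) in
/-- The Euler operator `X · d/dX`, which multiplies `X ^ j` by `j`. -/
noncomputable def eulerOperator : R[X] →ₗ[R] R[X] := LinearMap.mulLeft R X ∘ₗ derivative

lemma eulerOperator_apply (f : R[X]) : eulerOperator R f = X * derivative f := rfl

lemma eulerOperator_pow_X_pow (i j : ℕ) :
    (eulerOperator R ^ i) (X ^ j) = C ((j : R) ^ i) * X ^ j := by
  induction i with
  | zero => simp
  | succ i ih =>
    rw [pow_succ', Module.End.mul_apply, ih, eulerOperator_apply, derivative_C_mul_X_pow]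
    rcases j with _ | j
    · simp
    · rw [Nat.add_sub_cancel, mul_left_comm, ← pow_succ', ← pow_succ]

lemma exists_eulerOperator_pow_X_sub_one_pow {N i : ℕ} (hi : i ≤ N) :
    ∃ Q : R[X], (eulerOperator R ^ i) ((X - 1) ^ N) = (X - 1) ^ (N - i) * Q ∧
      Q.eval 1 = N.descFactorial i := by
  induction i with
  | zero => exact ⟨1, by simp, by simp⟩
  | succ i ih =>
    obtain ⟨Q, hQ, hQ1⟩ := ih (by lia)
    obtain ⟨d, hd⟩ : ∃ d, N - i = d + 1 := ⟨N - i - 1, by lia⟩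
    have hd' : N - (i + 1) = d := by lia
    refine ⟨X * (((d + 1 : ℕ) : R[X]) * Q + (X - 1) * derivative Q), ?_, ?_⟩
    · rw [pow_succ', Module.End.mul_apply, hQ, hd, hd', eulerOperator_apply, derivative_mul,
        derivative_pow, derivative_sub, derivative_X, derivative_one]
      simp only [Nat.add_sub_cancel, map_natCast]
      ring
    · rw [Nat.descFactorial_succ, hd]
      simp [hQ1]

end EulerOperator

section CongruenceModuloP

open Polynomial

lemma exists_prod_X_pow_sub_X_pow_eq {R ι : Type*} [CommRing R] (s : Finset ι) (a b : ι → ℕ) :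
    ∃ Q : R[X], ∏ k ∈ s, (X ^ a k - X ^ b k) = (X - 1) ^ s.card * Q ∧
      Q.eval 1 = ∏ k ∈ s, ((a k : R) - b k) := by
  refine ⟨∏ k ∈ s, (∑ i ∈ Finset.range (a k), X ^ i - ∑ i ∈ Finset.range (b k), X ^ i), ?_, ?_⟩
  · rw [← Finset.prod_const, ← Finset.prod_mul_distrib]
    refine Finset.prod_congr rfl fun k _ => ?_
    rw [mul_sub, mul_geom_sum, mul_geom_sum, sub_sub_sub_cancel_right]
  · simp [eval_prod, eval_geom_sum]

/-- The product `∏ (X ^ k - X ^ (N - k))` over `1 ≤ k ≤ N / 2`, whose value at `exp (2πi/N)` is,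
up to a power of `i`, a product of sines. -/
noncomputable def reflectionProduct (N : ℕ) : ℤ[X] :=
  ∏ k ∈ Finset.range (N / 2), (X ^ (k + 1) - X ^ (N - (k + 1)))

lemma exists_map_reflectionProduct_eq (N : ℕ) :
    ∃ Q : (ZMod N)[X], (reflectionProduct N).map (Int.castRingHom (ZMod N)) =
        (X - 1) ^ (N / 2) * Q ∧ Q.eval 1 = 2 ^ (N / 2) * (N / 2).factorial := by
  obtain ⟨Q, hQ, hQ1⟩ := exists_prod_X_pow_sub_X_pow_eq (R := ZMod N) (Finset.range (N / 2))
    (fun k => k + 1) (fun k => N - (k + 1))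
  rw [Finset.card_range] at hQ
  refine ⟨Q, ?_, ?_⟩
  · rw [← hQ, reflectionProduct, Polynomial.map_prod]
    simp only [Polynomial.map_sub, Polynomial.map_pow, map_X]
  · rw [hQ1, ← Finset.prod_range_add_one_eq_factorial, Nat.cast_prod, Finset.pow_eq_prod_const,
      ← Finset.prod_mul_distrib]
    refine Finset.prod_congr rfl fun k hk => ?_
    have hk : k + 1 ≤ N := by have := Finset.mem_range.1 hk; lia
    rw [Nat.cast_sub hk, CharP.cast_eq_zero (ZMod N) N]
    push_cast
    ring

lemma cast_descFactorial_sub_one_half (N : ℕ) :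
    ((N - 1).descFactorial (N / 2) : ZMod N) = (-1) ^ (N / 2) * (N / 2).factorial := by
  rw [Nat.descFactorial_eq_prod_range, ← Finset.prod_range_add_one_eq_factorial, Nat.cast_prod,
    Nat.cast_prod, Finset.pow_eq_prod_const, ← Finset.prod_mul_distrib]
  refine Finset.prod_congr rfl fun k hk => ?_
  have hk : 1 + k ≤ N := by have := Finset.mem_range.1 hk; lia
  rw [Nat.sub_sub, Nat.cast_sub hk, CharP.cast_eq_zero (ZMod N) N]
  push_cast
  ring

variable (p : ℕ) [Fact p.Prime]

/-- The Fekete polynomial `∑ (j/p) X ^ j` over `0 ≤ j < p`, whose value at `exp (2πi/p)` is the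
quadratic Gauss sum. -/
noncomputable def feketePolynomial : ℤ[X] :=
  ∑ j ∈ Finset.range p, C (legendreSym p j) * X ^ j

lemma geom_sum_X_eq_X_sub_one_pow (R : Type*) [CommRing R] [CharP R p] :
    ∑ j ∈ Finset.range p, (X : R[X]) ^ j = (X - 1) ^ (p - 1) := by
  have hcyc := cyclotomic_mul_prime_eq_pow_of_not_dvd R (Nat.Prime.not_dvd_one Fact.out)
  rwa [one_mul, cyclotomic_one, cyclotomic_prime] at hcyc

lemma map_feketePolynomial :
    (feketePolynomial p).map (Int.castRingHom (ZMod p)) =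
      (eulerOperator (ZMod p) ^ (p / 2)) ((X - 1) ^ (p - 1)) := by
  rw [← geom_sum_X_eq_X_sub_one_pow, map_sum, feketePolynomial, Polynomial.map_sum]
  refine Finset.sum_congr rfl fun j _ => ?_
  rw [eulerOperator_pow_X_pow, Polynomial.map_mul, Polynomial.map_pow, map_C, map_X,
    eq_intCast, legendreSym.eq_pow, Int.cast_natCast]

variable {p}

lemma exists_map_feketePolynomial_eq (hp : p ≠ 2) :
    ∃ Q : (ZMod p)[X], (feketePolynomial p).map (Int.castRingHom (ZMod p)) =
        (X - 1) ^ (p / 2) * Q ∧ Q.eval 1 = (-1) ^ (p / 2) * (p / 2).factorial := by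
  obtain ⟨Q, hQ, hQ1⟩ := exists_eulerOperator_pow_X_sub_one_pow (R := ZMod p)
    (show p / 2 ≤ p - 1 by lia)
  have hhalf := Nat.two_mul_div_two_add_one_of_odd ((Fact.out : p.Prime).odd_of_ne_two hp)
  rw [show p - 1 - p / 2 = p / 2 by lia] at hQ
  exact ⟨Q, (map_feketePolynomial p).trans hQ, hQ1.trans (cast_descFactorial_sub_one_half p)⟩

lemma mul_two_pow_eq_neg_one_pow_of_cyclotomic_dvd (hp : p ≠ 2) {ε : ℤ}
    (hdvd : cyclotomic p ℤ ∣ feketePolynomial p - C ε * reflectionProduct p) :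
    (ε : ZMod p) * 2 ^ (p / 2) = (-1) ^ (p / 2) := by
  obtain ⟨F, hF, hF1⟩ := exists_map_feketePolynomial_eq hp
  obtain ⟨B, hB, hB1⟩ := exists_map_reflectionProduct_eq p
  have hhalf := Nat.two_mul_div_two_add_one_of_odd ((Fact.out : p.Prime).odd_of_ne_two hp)
  have hhalf0 : p / 2 ≠ 0 := by have := (Fact.out : p.Prime).two_le; lia
  have hX : ((X : (ZMod p)[X]) - 1) ^ (p / 2) ≠ 0 := pow_ne_zero _ (X_sub_C_ne_zero 1)
  have hdvd_mod := Polynomial.map_dvd (Int.castRingHom (ZMod p)) hdvd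
  rw [map_cyclotomic_int, cyclotomic_prime, geom_sum_X_eq_X_sub_one_pow, Polynomial.map_sub,
    Polynomial.map_mul, hF, hB, map_C, mul_left_comm, ← mul_sub,
    show p - 1 = p / 2 + p / 2 by lia, pow_add,
    mul_dvd_mul_iff_left hX] at hdvd_mod
  have hroot := dvd_iff_isRoot.1 ((dvd_pow_self (X - C 1) hhalf0).trans hdvd_mod)
  have hfact : ((p / 2).factorial : ZMod p) ≠ 0 := by
    rw [Ne, ZMod.natCast_eq_zero_iff, (Fact.out : p.Prime).dvd_factorial]
    lia
  rw [IsRoot, eval_sub, eval_mul, eval_C, hF1, hB1, eq_intCast, ← mul_assoc, ← sub_mul] at hroot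
  exact (sub_eq_zero.1 ((mul_eq_zero.1 hroot).resolve_right hfact)).symm

lemma eq_legendreSym_neg_two_of_cyclotomic_dvd (hp : p ≠ 2) {ε : ℤ} (hε : ε = 1 ∨ ε = -1)
    (hdvd : cyclotomic p ℤ ∣ feketePolynomial p - C ε * reflectionProduct p) :
    ε = legendreSym p (-2) := by
  have hpow : (ε : ZMod p) = (legendreSym p (-2) : ℤ) := by
    have hmul := mul_two_pow_eq_neg_one_pow_of_cyclotomic_dvd hp hdvd
    have hε_sq : (ε : ZMod p) * ε = 1 := by rcases hε with rfl | rfl <;> simp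
    have htwo : (2 : ZMod p) ^ (p / 2) = ε * (-1) ^ (p / 2) := by
      rw [← hmul, ← mul_assoc, hε_sq, one_mul]
    rw [legendreSym.eq_pow]
    push_cast
    rw [neg_pow, htwo, mul_left_comm, ← mul_pow, neg_one_mul, neg_neg, one_pow, mul_one]
  have hringChar : ringChar (ZMod p) ≠ 2 := by rwa [ZMod.ringChar_zmod_n]
  refine Int.cast_injOn_of_ringChar_ne_two hringChar ?_ ?_ hpow
  · rcases hε with rfl | rfl <;> simp
  · exact quadraticChar_isQuadratic (ZMod p) _

end CongruenceModuloP

section SineProduct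

open Real Polynomial

lemma prod_abs_two_mul_sin {n d : ℕ} (hd : d.Coprime (n + 1)) :
    ∏ k ∈ Finset.range n, |2 * sin (π * d * (k + 1) / (n + 1))| = n + 1 := by
  have hprod := congrArg norm
    (Complex.isPrimitiveRoot_exp_of_coprime d (n + 1) n.succ_ne_zero hd).prod_one_sub_pow_eq_order
  rw [norm_prod, ← Nat.cast_add_one, Complex.norm_natCast] at hprod
  refine (Finset.prod_congr rfl fun k _ => ?_).trans (hprod.trans n.cast_add_one)
  have hnorm := Complex.norm_exp_I_mul_ofReal_sub_one (2 * (π * d * (k + 1) / (n + 1)))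
  rw [mul_div_cancel_left₀ _ two_ne_zero, Real.norm_eq_abs] at hnorm
  rw [← hnorm, norm_sub_rev, ← Complex.exp_nat_mul]
  push_cast
  ring_nf

lemma abs_sin_two_pi_mul_sub_div {a : ℝ} (ha : a ≠ 0) (x : ℝ) :
    |sin (2 * π * (a - x) / a)| = |sin (2 * π * x / a)| := by
  rw [mul_sub, sub_div, mul_div_cancel_right₀ _ ha, sin_two_pi_sub, abs_neg]

lemma prod_two_mul_sin_eq_sqrt (n : ℕ) :
    ∏ k ∈ Finset.range n, (2 * sin (2 * π * (k + 1) / (2 * n + 1))) = √(2 * n + 1) := by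
  set f : ℕ → ℝ := fun k => 2 * sin (2 * π * (k + 1) / (2 * n + 1))
  have hpos : ∀ k ∈ Finset.range n, 0 < f k := by
    intro k hk
    have hlt : (2 : ℝ) * (k + 1) < 2 * n + 1 := by
      exact_mod_cast (by have := Finset.mem_range.1 hk; lia : 2 * (k + 1) < 2 * n + 1)
    refine mul_pos two_pos (sin_pos_of_pos_of_lt_pi (by positivity) ?_)
    rw [div_lt_iff₀ (by positivity)]
    nlinarith [pi_pos]
  have hreflect : ∀ k ∈ Finset.range n, |f (n - 1 - k)| = |f (n + k)| := by
    intro k hk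
    have hcast : ((n - 1 - k : ℕ) + 1 : ℝ) = 2 * n + 1 - ((n + k : ℕ) + 1) := by
      rw [eq_sub_iff_add_eq]
      exact_mod_cast (by have := Finset.mem_range.1 hk; lia :
        n - 1 - k + 1 + (n + k + 1) = 2 * n + 1)
    simp only [f, abs_mul]
    rw [hcast, abs_sin_two_pi_mul_sub_div (by positivity)]
  have hprod := prod_abs_two_mul_sin (n := 2 * n) (d := 2) (by simp)
  rw [eq_comm, sqrt_eq_iff_mul_self_eq_of_pos (Finset.prod_pos hpos)]
  calc (∏ k ∈ Finset.range n, f k) * ∏ k ∈ Finset.range n, f k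
      = (∏ k ∈ Finset.range n, |f k|) * ∏ k ∈ Finset.range n, |f (n + k)| := by
        rw [← Finset.prod_congr rfl hreflect, Finset.prod_range_reflect (fun k => |f k|),
          Finset.prod_congr rfl fun k hk => abs_of_pos (hpos k hk)]
    _ = ∏ k ∈ Finset.range (2 * n), |f k| := by
        rw [two_mul, Finset.prod_range_add (fun k => |f k|)]
    _ = 2 * n + 1 := by
        push_cast at hprod
        rw [← hprod, mul_comm π 2]

lemma exp_pow_sub_exp_pow_sub {N k : ℕ} (hN : N ≠ 0) (hk : k ≤ N) :
    Complex.exp (2 * π * Complex.I / N) ^ k - Complex.exp (2 * π * Complex.I / N) ^ (N - k) =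
      Complex.I * (2 * sin (2 * π * k / N) : ℝ) := by
  have hpow : Complex.exp (2 * π * Complex.I / N) ^ k =
      Complex.exp ((2 * π * k / N : ℝ) * Complex.I) := by
    rw [← Complex.exp_nat_mul]
    push_cast
    ring_nf
  rw [pow_sub₀ _ (Complex.exp_ne_zero _) hk, (Complex.isPrimitiveRoot_exp N hN).pow_eq_one, one_mul,
    hpow, ← Complex.exp_neg, ← neg_mul, Complex.ofReal_mul, Complex.ofReal_sin, Complex.sin]
  push_cast
  linear_combination (Complex.exp (2 * π * k / N * Complex.I) -
    Complex.exp (-(2 * π * k / N) * Complex.I)) * Complex.I_sq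

lemma aeval_exp_reflectionProduct {N : ℕ} (hN : Odd N) :
    aeval (Complex.exp (2 * π * Complex.I / N)) (reflectionProduct N) =
      Complex.I ^ (N / 2) * √N := by
  have hhalf : (N : ℝ) = 2 * (N / 2 : ℕ) + 1 :=
    mod_cast (Nat.two_mul_div_two_add_one_of_odd hN).symm
  simp only [reflectionProduct, map_prod, map_sub, map_pow, aeval_X]
  rw [hhalf, ← prod_two_mul_sin_eq_sqrt, ← hhalf, Complex.ofReal_prod, Finset.pow_eq_prod_const,
    ← Finset.prod_mul_distrib]
  refine Finset.prod_congr rfl fun k hk => ?_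
  have hk : k + 1 ≤ N := by have := Finset.mem_range.1 hk; lia
  rw [exp_pow_sub_exp_pow_sub hN.pos.ne' hk, Nat.cast_add_one]

end SineProduct

section QuadraticGaussSum

open Real Polynomial

variable (p : ℕ) [Fact p.Prime]

/-- The Legendre symbol as a complex-valued multiplicative character of `ℤ/pℤ`. -/
def legendreChar : MulChar (ZMod p) ℂ :=
  (quadraticChar (ZMod p)).ringHomComp (Int.castRingHom ℂ)

lemma legendreChar_apply (j : ZMod p) :
    legendreChar p j = ((quadraticChar (ZMod p) j : ℝ) : ℂ) := by
  rw [legendreChar, MulChar.ringHomComp_apply, eq_intCast, Complex.ofReal_intCast]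

lemma legendreChar_natCast (n : ℕ) : legendreChar p n = (legendreSym p n : ℝ) := by
  rw [legendreChar_apply, legendreSym, Int.cast_natCast]

lemma legendreChar_isQuadratic : (legendreChar p).IsQuadratic :=
  (quadraticChar_isQuadratic (ZMod p)).comp _

lemma sum_zmod_eq_sum_range {M : Type*} [AddCommMonoid M] {N : ℕ} [NeZero N] (F : ZMod N → M) :
    ∑ a, F a = ∑ j ∈ Finset.range N, F j := by
  obtain ⟨n, rfl⟩ := Nat.exists_eq_succ_of_ne_zero (NeZero.ne N)
  rw [Finset.sum_range]
  exact Finset.sum_congr rfl fun a _ => congrArg F (ZMod.natCast_zmod_val a).symm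

lemma aeval_exp_feketePolynomial :
    aeval (Complex.exp (2 * π * Complex.I / p)) (feketePolynomial p) =
      gaussSum (legendreChar p) ZMod.stdAddChar := by
  rw [gaussSum, sum_zmod_eq_sum_range, feketePolynomial, map_sum]
  refine Finset.sum_congr rfl fun j _ => ?_
  rw [map_mul, aeval_C, map_pow, aeval_X, legendreChar_natCast, ZMod.stdAddChar_apply,
    ZMod.toCircle_natCast, ← Complex.exp_nat_mul, eq_intCast, Complex.ofReal_intCast]
  ring_nf

variable {p}

lemma legendreChar_ne_one (hp : p ≠ 2) : legendreChar p ≠ 1 :=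
  (MulChar.ringHomComp_ne_one_iff (RingHom.injective_int _)).2
    (quadraticChar_ne_one (by rwa [ZMod.ringChar_zmod_n]))

lemma quadraticChar_zmod_neg_one (hp : p ≠ 2) : quadraticChar (ZMod p) (-1) = (-1) ^ (p / 2) := by
  rw [quadraticChar_neg_one (by rwa [ZMod.ringChar_zmod_n]), ZMod.card,
    ZMod.χ₄_eq_neg_one_pow ((Fact.out : p.Prime).mod_two_eq_one_iff_ne_two.2 hp)]

lemma gaussSum_legendreChar_sq (hp : p ≠ 2) :
    gaussSum (legendreChar p) ZMod.stdAddChar ^ 2 = (Complex.I ^ (p / 2) * √p) ^ 2 := by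
  rw [gaussSum_sq (χ := legendreChar p) (legendreChar_ne_one hp) (legendreChar_isQuadratic p)
    (ZMod.isPrimitive_stdAddChar p), legendreChar_apply, quadraticChar_zmod_neg_one hp, ZMod.card,
    mul_pow, ← Complex.ofReal_pow, sq_sqrt p.cast_nonneg, pow_right_comm, Complex.I_sq]
  push_cast
  rfl

theorem gaussSum_legendreChar (hp : p ≠ 2) :
    gaussSum (legendreChar p) ZMod.stdAddChar =
      legendreSym p (-2) * (Complex.I ^ (p / 2) * √p) := by
  have hprime : p.Prime := Fact.out
  have hprim := Complex.isPrimitiveRoot_exp p hprime.ne_zero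
  obtain ⟨ε, hε, hgauss⟩ : ∃ ε : ℤ, (ε = 1 ∨ ε = -1) ∧
      gaussSum (legendreChar p) ZMod.stdAddChar = ε * (Complex.I ^ (p / 2) * √p) := by
    rcases sq_eq_sq_iff_eq_or_eq_neg.1 (gaussSum_legendreChar_sq hp) with h | h
    · exact ⟨1, Or.inl rfl, by simp [h]⟩
    · exact ⟨-1, Or.inr rfl, by simp [h]⟩
  have hdvd : cyclotomic p ℤ ∣ feketePolynomial p - C ε * reflectionProduct p := by
    rw [cyclotomic_eq_minpoly hprim hprime.pos]
    apply minpoly.isIntegrallyClosed_dvd (hprim.isIntegral hprime.pos)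
    rw [map_sub, map_mul, aeval_exp_feketePolynomial, aeval_C, hgauss,
      aeval_exp_reflectionProduct (hprime.odd_of_ne_two hp), eq_intCast, sub_self]
  rw [hgauss, eq_legendreSym_neg_two_of_cyclotomic_dvd hp hε hdvd]

lemma gaussSum_legendreChar_of_mod_four_eq_three (hp4 : p % 4 = 3) :
    gaussSum (legendreChar p) ZMod.stdAddChar = Complex.I * √p := by
  have hp : p ≠ 2 := by lia
  rw [gaussSum_legendreChar hp, legendreSym.at_neg_two hp, ZMod.χ₈'_nat_eq_if_mod_eight,
    if_neg (by lia), Complex.I_pow_eq_pow_mod]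
  rcases (by lia : p % 8 = 3 ∨ p % 8 = 7) with h8 | h8
  · rw [if_pos (Or.inr h8), show p / 2 % 4 = 1 by lia]
    simp
  · rw [if_neg (by lia), show p / 2 % 4 = 3 by lia, Complex.I_pow_three]
    simp

lemma gaussSum_mulShift_of_isQuadratic {F R : Type*} [Field F] [Fintype F] [CommRing R] [IsDomain R]
    {χ : MulChar F R} (hχ : χ ≠ 1) (hχ2 : χ.IsQuadratic) (ψ : AddChar F R) (a : F) :
    gaussSum χ (ψ.mulShift a) = χ a * gaussSum χ ψ := by
  rcases eq_or_ne a 0 with rfl | ha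
  · rw [AddChar.mulShift_zero, gaussSum_one_right hχ, χ.map_zero, zero_mul]
  · simpa only [hχ2.inv, Units.val_mk0] using gaussSum_mulShift_eq χ ψ (Units.mk0 a ha)

lemma stdAddChar_natCast_mul_im {N : ℕ} [NeZero N] (m : ℕ) (j : ZMod N) :
    (ZMod.stdAddChar ((m : ZMod N) * j)).im = sin (2 * π * m * (j.val / N)) := by
  rw [← ZMod.natCast_zmod_val j, ← Nat.cast_mul, ZMod.stdAddChar_apply, ZMod.toCircle_natCast,
    ZMod.natCast_zmod_val, ← Complex.exp_ofReal_mul_I_im]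
  push_cast
  ring_nf

lemma discreteSineTransform_eq_im_gaussSum_mulShift (m : ℕ) :
    discreteSineTransform (fun j : ZMod p => (quadraticChar (ZMod p) j : ℝ)) m =
      (gaussSum (legendreChar p) (ZMod.stdAddChar.mulShift (m : ZMod p))).im := by
  rw [gaussSum, Complex.im_sum, discreteSineTransform]
  refine Finset.sum_congr rfl fun j _ => ?_
  rw [AddChar.mulShift_apply, legendreChar_apply, Complex.im_ofReal_mul, stdAddChar_natCast_mul_im]

lemma discreteSineTransform_quadraticChar (hp4 : p % 4 = 3) (m : ℕ) :
    discreteSineTransform (fun j : ZMod p => (quadraticChar (ZMod p) j : ℝ)) m =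
      legendreSym p m * √p := by
  rw [discreteSineTransform_eq_im_gaussSum_mulShift, gaussSum_mulShift_of_isQuadratic
    (χ := legendreChar p) (legendreChar_ne_one (by lia)) (legendreChar_isQuadratic p),
    gaussSum_legendreChar_of_mod_four_eq_three hp4, legendreChar_natCast, Complex.im_ofReal_mul,
    mul_comm Complex.I, Complex.im_ofReal_mul, Complex.I_im, mul_one]

lemma odd_quadraticChar (hp4 : p % 4 = 3) :
    Function.Odd fun j : ZMod p => (quadraticChar (ZMod p) j : ℝ) := by
  intro j
  dsimp only
  rw [← neg_one_mul, map_mul, quadraticChar_zmod_neg_one (by lia),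
    (Nat.odd_iff.2 (by lia) : Odd (p / 2)).neg_one_pow, neg_one_mul, Int.cast_neg]

end QuadraticGaussSum

theorem stmt_6_general (p : ℕ) [Fact p.Prime] (hp4 : p % 4 = 3) (α : ℝ) (h0 : 0 < α)
    (hint : ∀ k : ℤ, α * (p : ℝ) ≠ (k : ℝ)) :
    Tendsto (fun M : ℕ =>
        ∑ m ∈ Finset.Icc 1 M,
          (1 - Real.cos (2 * Real.pi * (m : ℝ) * α)) / (m : ℝ) *
            (legendreSym p (m : ℤ) : ℝ))
      atTop
      (nhds (Real.pi / Real.sqrt p *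
        ((∑ n ∈ Finset.Icc 1 ⌊α * (p : ℝ)⌋₊, legendreSym p (n : ℤ) : ℤ) : ℝ))) := by
  have hsqrt : Real.sqrt p ≠ 0 := (Real.sqrt_pos.2 (mod_cast (Fact.out : p.Prime).pos)).ne'
  have hlim := (tendsto_sum_one_sub_cos_div_mul_discreteSineTransform (odd_quadraticChar hp4) h0.le
    hint).div_const (Real.sqrt p)
  convert hlim using 2
  · simp only [discreteSineTransform_quadraticChar hp4, ← mul_assoc, ← Finset.sum_mul]
    rw [mul_div_cancel_right₀ _ hsqrt]
  · simp only [legendreSym, Int.cast_sum, Int.cast_natCast]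
    rw [div_mul_eq_mul_div]

/-- For a prime `p ≡ 3 (mod 4)` and `0 < α < 1` with `αp ∉ ℤ`, the partial
sums `∑_{m=1}^{M} ((1 - cos(2πmα))/m) (m/p)` converge to `(π/√p) · L(α,p)`,
where `L(α,p) = ∑_{n=1}^{⌊αp⌋} (n/p)`. -/
theorem stmt_6 (p : ℕ) [Fact p.Prime] (hp4 : p % 4 = 3) (α : ℝ) (h0 : 0 < α)
    (h1 : α < 1) (hint : ∀ k : ℤ, α * (p : ℝ) ≠ (k : ℝ)) :
    Tendsto (fun M : ℕ =>
        ∑ m ∈ Finset.Icc 1 M,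
          (1 - Real.cos (2 * Real.pi * (m : ℝ) * α)) / (m : ℝ) *
            (legendreSym p (m : ℤ) : ℝ))
      atTop
      (nhds (Real.pi / Real.sqrt p *
        ((∑ n ∈ Finset.Icc 1 ⌊α * (p : ℝ)⌋₊, legendreSym p (n : ℤ) : ℤ) : ℝ))) := by
  exact stmt_6_general p hp4 α h0 hint
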